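/- The center of the Hantzsche–Wendt group Δ_P is trivial. -/

import Mathlib

open FreeGroup in
/-- Relators of the Hantzsche–Wendt group: `x⁻¹y²xy²` and `y⁻¹x²yx²`,
encoding the relations `x⁻¹y²x = y⁻²` and `y⁻¹x²y = x⁻²`. -/
def hwRels : Set (FreeGroup (Fin 2)) :=
  {(of 0)⁻¹ * of 1 ^ 2 * of 0 * of 1 ^ 2,
   (of 1)⁻¹ * of 0 ^ 2 * of 1 * of 0 ^ 2}

/-- The Hantzsche–Wendt group `Δ_P = ⟨x, y ∣ x⁻¹y²x = y⁻², y⁻¹x²y = x⁻²⟩`. -/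
abbrev HantzscheWendtGroup : Type := PresentedGroup hwRels

/-- The generator `x` of the Hantzsche–Wendt group. -/
def hwX : HantzscheWendtGroup := PresentedGroup.of 0

/-- The generator `y` of the Hantzsche–Wendt group. -/
def hwY : HantzscheWendtGroup := PresentedGroup.of 1

/-- Algebraic consequences of the two relations. -/
theorem hw_aux {G : Type*} [Group G] (x y : G) (h1 : x⁻¹ * y ^ 2 * x * y ^ 2 = 1)
    (h2 : y⁻¹ * x ^ 2 * y * x ^ 2 = 1) :
    SemiconjBy x (y ^ 2) (y ^ 2)⁻¹ ∧ SemiconjBy y (x ^ 2) (x ^ 2)⁻¹ ∧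
    SemiconjBy x ((x * y) ^ 2) ((x * y) ^ 2)⁻¹ ∧ SemiconjBy y ((x * y) ^ 2) ((x * y) ^ 2)⁻¹ ∧
    Commute (x ^ 2) (y ^ 2) ∧ Commute (x ^ 2) ((x * y) ^ 2) ∧ Commute (y ^ 2) ((x * y) ^ 2) := by
  have a1 : SemiconjBy x (y ^ 2) (y ^ 2)⁻¹ := by
    have : (y ^ 2) * (x * y ^ 2) = x := by
      calc (y ^ 2) * (x * y ^ 2) = x * (x⁻¹ * y ^ 2 * x * y ^ 2) := by group
        _ = x := by rw [h1, mul_one]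
    show x * y ^ 2 = (y ^ 2)⁻¹ * x
    rw [eq_inv_mul_iff_mul_eq, this]
  have a2 : SemiconjBy y (x ^ 2) (x ^ 2)⁻¹ := by
    have : (x ^ 2) * (y * x ^ 2) = y := by
      calc (x ^ 2) * (y * x ^ 2) = y * (y⁻¹ * x ^ 2 * y * x ^ 2) := by group
        _ = y := by rw [h2, mul_one]
    show y * x ^ 2 = (x ^ 2)⁻¹ * y
    rw [eq_inv_mul_iff_mul_eq, this]
  have cAB : Commute (x ^ 2) (y ^ 2) := by
    have := a1.inv_right.mul_left a1
    rw [inv_inv, ← pow_two] at this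
    exact this
  have a3 : SemiconjBy x ((x * y) ^ 2) ((x * y) ^ 2)⁻¹ := by
    show x * (x * y) ^ 2 = ((x * y) ^ 2)⁻¹ * x
    have e : x * (x * y) ^ 2 * x⁻¹ * (x * y) ^ 2 = 1 := by
      calc x * (x * y) ^ 2 * x⁻¹ * (x * y) ^ 2 = x ^ 2 * y * (x * y ^ 2) * x * y := by
            simp only [pow_two]; group
        _ = x ^ 2 * y * ((y ^ 2)⁻¹ * x) * x * y := by rw [a1.eq]
        _ = x ^ 2 * (y ^ 2)⁻¹ * (y * x ^ 2) * y := by simp only [pow_two]; group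
        _ = x ^ 2 * (y ^ 2)⁻¹ * ((x ^ 2)⁻¹ * y) * y := by rw [a2.eq]
        _ = (x ^ 2 * (y ^ 2)⁻¹) * (x ^ 2)⁻¹ * y ^ 2 := by simp only [pow_two]; group
        _ = 1 := by rw [cAB.inv_right.eq]; group
    exact mul_inv_eq_iff_eq_mul.mp (eq_inv_of_mul_eq_one_left e)
  have a4 : SemiconjBy y ((x * y) ^ 2) ((x * y) ^ 2)⁻¹ := by
    have c : SemiconjBy (x * y) ((x * y) ^ 2) ((x * y) ^ 2) := (Commute.refl (x * y)).pow_right 2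
    have d := a3.inv_right.inv_symm_left
    rw [inv_inv] at d
    have := d.mul_left c
    rwa [inv_mul_cancel_left] at this
  refine ⟨a1, a2, a3, a4, cAB, ?_, ?_⟩
  · have := a3.inv_right.mul_left a3
    rw [inv_inv, ← pow_two] at this
    exact this
  · have := a4.inv_right.mul_left a4
    rw [inv_inv, ← pow_two] at this
    exact this

/-- Words in normal form. -/
def hwNF {G : Type*} [Group G] (x y g : G) : Prop :=
  ∃ i j k : ℤ, ∃ w : G, (w = 1 ∨ w = x ∨ w = y ∨ w = x * y) ∧
    g = (x ^ 2) ^ i * (y ^ 2) ^ j * ((x * y) ^ 2) ^ k * w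

theorem hwNF_trans {G : Type*} [Group G] (x y g : G) (h1 : x⁻¹ * y ^ 2 * x * y ^ 2 = 1)
    (h2 : y⁻¹ * x ^ 2 * y * x ^ 2 = 1) (h : hwNF x y g) (l m n : ℤ) :
    hwNF x y ((x ^ 2) ^ l * (y ^ 2) ^ m * ((x * y) ^ 2) ^ n * g) := by
  obtain ⟨-, -, -, -, cAB, cAC, cBC⟩ := hw_aux x y h1 h2
  obtain ⟨i, j, k, w, hw, rfl⟩ := h
  refine ⟨l + i, m + j, n + k, w, hw, ?_⟩
  generalize x ^ 2 = A at *
  generalize y ^ 2 = B at *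
  generalize (x * y) ^ 2 = C at *
  have e1 : C ^ n * A ^ i = A ^ i * C ^ n := (cAC.zpow_zpow i n).eq.symm
  have e2 : C ^ n * B ^ j = B ^ j * C ^ n := (cBC.zpow_zpow j n).eq.symm
  have e3 : B ^ m * A ^ i = A ^ i * B ^ m := (cAB.zpow_zpow i m).eq.symm
  calc A ^ l * B ^ m * C ^ n * (A ^ i * B ^ j * C ^ k * w)
      = A ^ l * B ^ m * (C ^ n * A ^ i) * B ^ j * C ^ k * w := by simp only [mul_assoc]
    _ = A ^ l * (B ^ m * A ^ i) * (C ^ n * B ^ j) * C ^ k * w := by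
        rw [e1]; simp only [mul_assoc]
    _ = _ := by rw [e2, e3]; simp only [mul_assoc, zpow_add]

theorem hwNF_x {G : Type*} [Group G] (x y g : G) (h1 : x⁻¹ * y ^ 2 * x * y ^ 2 = 1)
    (h2 : y⁻¹ * x ^ 2 * y * x ^ 2 = 1) (h : hwNF x y g) : hwNF x y (x * g) := by
  obtain ⟨a1, a2, a3, a4, cAB, cAC, cBC⟩ := hw_aux x y h1 h2
  obtain ⟨i, j, k, w, hw, rfl⟩ := h
  have key : x * ((x ^ 2) ^ i * (y ^ 2) ^ j * ((x * y) ^ 2) ^ k * w) =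
      (x ^ 2) ^ i * (y ^ 2) ^ (-j) * ((x * y) ^ 2) ^ (-k) * (x * w) := by
    have a0 : SemiconjBy x (x ^ 2) (x ^ 2) := (Commute.refl x).pow_right 2
    have := ((a0.zpow_right i).mul_right (a1.zpow_right j)).mul_right (a3.zpow_right k)
    rw [inv_zpow', inv_zpow'] at this
    rw [← mul_assoc, this.eq, mul_assoc]
  rw [key]
  apply hwNF_trans x y _ h1 h2
  rcases hw with rfl | rfl | rfl | rfl
  · exact ⟨0, 0, 0, x, by simp, by simp⟩
  · exact ⟨1, 0, 0, 1, by simp, by simp [pow_two]⟩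
  · exact ⟨0, 0, 0, x * w, by simp, by simp⟩
  · exact ⟨1, 0, 0, y, by simp, by simp [pow_two, mul_assoc]⟩

theorem hwNF_y {G : Type*} [Group G] (x y g : G) (h1 : x⁻¹ * y ^ 2 * x * y ^ 2 = 1)
    (h2 : y⁻¹ * x ^ 2 * y * x ^ 2 = 1) (h : hwNF x y g) : hwNF x y (y * g) := by
  obtain ⟨a1, a2, a3, a4, cAB, cAC, cBC⟩ := hw_aux x y h1 h2
  obtain ⟨i, j, k, w, hw, rfl⟩ := h
  have key : y * ((x ^ 2) ^ i * (y ^ 2) ^ j * ((x * y) ^ 2) ^ k * w) =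
      (x ^ 2) ^ (-i) * (y ^ 2) ^ j * ((x * y) ^ 2) ^ (-k) * (y * w) := by
    have a0 : SemiconjBy y (y ^ 2) (y ^ 2) := (Commute.refl y).pow_right 2
    have := ((a2.zpow_right i).mul_right (a0.zpow_right j)).mul_right (a4.zpow_right k)
    rw [inv_zpow', inv_zpow'] at this
    rw [← mul_assoc, this.eq, mul_assoc]
  rw [key]
  apply hwNF_trans x y _ h1 h2
  have yxy : y * (x * y) = (x ^ 2)⁻¹ * ((x * y) ^ 2)⁻¹ * x := by
    rw [mul_assoc, ← a3.eq]; simp only [pow_two]; group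
  rcases hw with rfl | rfl | rfl | rfl
  · exact ⟨0, 0, 0, y, by simp, by simp⟩
  · refine ⟨-1, 1, -1, w * y, by simp, ?_⟩
    have e : y * w = (y * (w * y)) * (y ^ 2)⁻¹ * y := by simp only [pow_two]; group
    have f : w * (y ^ 2)⁻¹ = y ^ 2 * w := by simpa using a1.inv_right.eq
    rw [e, yxy, mul_assoc _ w, f, zpow_neg_one, zpow_neg_one, zpow_one,
      mul_assoc (_⁻¹) (y ^ 2), cBC.inv_right.eq]
    simp only [mul_assoc]
  · exact ⟨0, 1, 0, 1, by simp, by simp [pow_two]⟩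
  · exact ⟨-1, 0, -1, x, by simp, by rw [yxy]; simp⟩

theorem hw_rel1 : hwX⁻¹ * hwY ^ 2 * hwX * hwY ^ 2 = 1 :=
  PresentedGroup.one_of_mem (rels := hwRels) (Or.inl rfl)

theorem hw_rel2 : hwY⁻¹ * hwX ^ 2 * hwY * hwX ^ 2 = 1 :=
  PresentedGroup.one_of_mem (rels := hwRels) (Or.inr rfl)

theorem hwNF_all (g : HantzscheWendtGroup) : hwNF hwX hwY g := by
  have h1 := hw_rel1
  have h2 := hw_rel2
  have hg : g ∈ Subgroup.closure (Set.range (PresentedGroup.of (rels := hwRels))) := by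
    rw [PresentedGroup.closure_range_of]; trivial
  induction hg using Subgroup.closure_induction_left with
  | one => exact ⟨0, 0, 0, 1, by simp, by simp⟩
  | mul_left s hs t _ ih =>
    obtain ⟨a, rfl⟩ := hs
    fin_cases a
    · exact hwNF_x _ _ _ h1 h2 ih
    · exact hwNF_y _ _ _ h1 h2 ih
  | inv_mul_cancel s hs t _ ih =>
    obtain ⟨a, rfl⟩ := hs
    fin_cases a
    · have := hwNF_trans _ _ _ h1 h2 (hwNF_x _ _ _ h1 h2 ih) (-1) 0 0
      convert this using 1
      show hwX⁻¹ * t = _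
      simp [pow_two]
    · have := hwNF_trans _ _ _ h1 h2 (hwNF_y _ _ _ h1 h2 ih) 0 (-1) 0
      convert this using 1
      show hwY⁻¹ * t = _
      simp [pow_two]

/-- The action of `x` on `ℤ³`. -/
def hwPX : Equiv.Perm (ℤ × ℤ × ℤ) where
  toFun p := (p.1 + 1, 1 - p.2.1, - p.2.2)
  invFun p := (p.1 - 1, 1 - p.2.1, - p.2.2)
  left_inv p := by simp
  right_inv p := by simp

/-- The action of `y` on `ℤ³`. -/
def hwPY : Equiv.Perm (ℤ × ℤ × ℤ) where
  toFun p := (- p.1, p.2.1 + 1, 1 - p.2.2)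
  invFun p := (- p.1, p.2.1 - 1, 1 - p.2.2)
  left_inv p := by simp
  right_inv p := by simp

theorem hwPX_apply (a b c : ℤ) : hwPX (a, b, c) = (a + 1, 1 - b, -c) := rfl
theorem hwPY_apply (a b c : ℤ) : hwPY (a, b, c) = (-a, b + 1, 1 - c) := rfl

/-- Translations of `ℤ³`. -/
def hwT (u v w : ℤ) : Equiv.Perm (ℤ × ℤ × ℤ) := Equiv.addLeft (u, v, w)

theorem hwT_apply (u v w a b c : ℤ) : hwT u v w (a, b, c) = (u + a, v + b, w + c) := rfl

theorem hwT_mul (u v w u' v' w' : ℤ) :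
    hwT u v w * hwT u' v' w' = hwT (u + u') (v + v') (w + w') := by
  ext1 ⟨a, b, c⟩
  simp only [Equiv.Perm.mul_apply, hwT_apply, add_assoc]

theorem hwT_zpow (u v w n : ℤ) : hwT u v w ^ n = hwT (n * u) (n * v) (n * w) := by
  have h0 : hwT 0 0 0 = 1 := by
    ext1 ⟨a, b, c⟩
    simp only [hwT_apply, zero_add, Equiv.Perm.one_apply]
  have hm : (hwT u v w)⁻¹ = hwT (-u) (-v) (-w) := by
    rw [inv_eq_iff_mul_eq_one, hwT_mul]
    simpa using h0
  induction n using Int.induction_on with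
  | zero => simp [h0]
  | succ n ih => rw [zpow_add_one, ih, hwT_mul]; congr 1 <;> ring
  | pred n ih => rw [zpow_sub_one, ih, hm, hwT_mul]; congr 1 <;> ring

theorem hwPX_sq : hwPX ^ 2 = hwT 2 0 0 := by
  ext1 ⟨a, b, c⟩
  simp only [pow_two, Equiv.Perm.mul_apply, hwT_apply, hwPX_apply, Prod.mk.injEq]
  omega

theorem hwPY_sq : hwPY ^ 2 = hwT 0 2 0 := by
  ext1 ⟨a, b, c⟩
  simp only [pow_two, Equiv.Perm.mul_apply, hwT_apply, hwPY_apply, Prod.mk.injEq]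
  omega

theorem hwPXY_sq : (hwPX * hwPY) ^ 2 = hwT 0 0 (-2) := by
  ext1 ⟨a, b, c⟩
  simp only [pow_two, Equiv.Perm.mul_apply, hwT_apply, hwPX_apply, hwPY_apply, Prod.mk.injEq]
  omega

theorem hwP_rels : ∀ r ∈ hwRels, FreeGroup.lift ![hwPX, hwPY] r = 1 := by
  rintro r (rfl | rfl)
  · simp only [map_mul, map_inv, map_pow, FreeGroup.lift_apply_of, Matrix.cons_val_zero,
      Matrix.cons_val_one]
    rw [hwPY_sq, mul_assoc, mul_assoc, inv_mul_eq_one]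
    ext1 ⟨a, b, c⟩
    simp only [Equiv.Perm.mul_apply, hwT_apply, hwPX_apply, Prod.mk.injEq]
    omega
  · simp only [map_mul, map_inv, map_pow, FreeGroup.lift_apply_of, Matrix.cons_val_zero,
      Matrix.cons_val_one]
    rw [hwPX_sq, mul_assoc, mul_assoc, inv_mul_eq_one]
    ext1 ⟨a, b, c⟩
    simp only [Equiv.Perm.mul_apply, hwT_apply, hwPY_apply, Prod.mk.injEq]
    omega

/-- The affine representation. -/
def hwRep : HantzscheWendtGroup →* Equiv.Perm (ℤ × ℤ × ℤ) := PresentedGroup.toGroup hwP_rels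

theorem hwRep_x : hwRep hwX = hwPX := by
  simp [hwRep, hwX]

theorem hwRep_y : hwRep hwY = hwPY := by
  simp [hwRep, hwY]

/-- The center of the Hantzsche–Wendt group is trivial. -/
theorem hw_center_trivial : Subgroup.center HantzscheWendtGroup = ⊥ := by
  rw [eq_bot_iff]
  intro g hg
  rw [Subgroup.mem_center_iff] at hg
  rw [Subgroup.mem_bot]
  obtain ⟨i, j, k, w, hw, rfl⟩ := hwNF_all g
  have hx : ∀ p, _ := fun p => DFunLike.congr_fun (congrArg hwRep (hg hwX)) p
  have hy : ∀ p, _ := fun p => DFunLike.congr_fun (congrArg hwRep (hg hwY)) p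
  simp only [map_mul, map_zpow, map_pow, hwRep_x, hwRep_y, hwPX_sq, hwPY_sq, hwPXY_sq, hwT_zpow,
    hwT_mul] at hx hy
  have hx0 := hx (0, 0, 0)
  have hx1 := hx (1, 1, 1)
  have hy0 := hy (0, 0, 0)
  have hy1 := hy (1, 1, 1)
  rcases hw with rfl | rfl | rfl | rfl <;>
  simp only [map_mul, map_one, hwRep_x, hwRep_y, Equiv.Perm.mul_apply, Equiv.Perm.one_apply,
    hwT_apply, hwPX_apply, hwPY_apply, Prod.mk.injEq] at hx0 hx1 hy0 hy1
  · obtain rfl : i = 0 := by omega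
    obtain rfl : j = 0 := by omega
    obtain rfl : k = 0 := by omega
    simp
  all_goals omega
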